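/- Let (Ω, 𝔉, ν) be an atomless probability space, let τ > 0, and let S ∈ L¹(ν) satisfy ∫ S dν = 0 and |∫_X S dν| ≤ (2τ)^{-1/2}·I(ν(X)) for every measurable set X ⊆ Ω. Then for every real p ≥ 1, τ^{p/2}·∫ |S|^p dν ≤ Γ((p+1)/2)/√π. -/

import Mathlib

open Real MeasureTheory

/-- The standard Gaussian density. -/
noncomputable def gaussPdf (z : ℝ) : ℝ := (Real.sqrt (2 * Real.pi))⁻¹ * Real.exp (-z ^ 2 / 2)

/-- The standard normal CDF. -/
noncomputable def Phi (r : ℝ) : ℝ := ∫ z in Set.Iic r, gaussPdf z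

/-- The inverse of the standard normal CDF. -/
noncomputable def PhiInv : ℝ → ℝ := Function.invFun Phi

/-- The Gaussian isoperimetric profile `I = φ ∘ Φ⁻¹`. -/
noncomputable def gaussI (a : ℝ) : ℝ := gaussPdf (PhiInv a)

open ProbabilityTheory

lemma aux_pdf (x : ℝ) : gaussianPDFReal 0 1 x = gaussPdf x := by
  simp [gaussianPDFReal, gaussPdf]

lemma aux_setInt {s : Set ℝ} (hs : MeasurableSet s) (f : ℝ → ℝ) :
    ∫ x in s, f x ∂(gaussianReal 0 1) = ∫ x in s, gaussPdf x * f x := by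
  rw [← integral_indicator hs, integral_gaussianReal_eq_integral_smul (by norm_num),
    ← integral_indicator hs]
  congr 1
  ext x
  by_cases h : x ∈ s <;> simp [h, aux_pdf]

lemma aux_int_pdf : Integrable gaussPdf := by
  have h := integrable_gaussianPDFReal 0 1
  have e : gaussianPDFReal 0 1 = gaussPdf := funext aux_pdf
  rwa [e] at h

lemma aux_phi (r : ℝ) : Phi r = (gaussianReal 0 1).real (Set.Iic r) := by
  have h := aux_setInt (measurableSet_Iic (a := r)) (fun _ => 1)
  simp only [mul_one] at h
  rw [Phi, ← h]
  simp

lemma aux_phi_cont : Continuous Phi := by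
  have h : ∀ r, Phi r = Phi 0 + ∫ x in (0:ℝ)..r, gaussPdf x := by
    intro r
    rw [← intervalIntegral.integral_Iic_sub_Iic aux_int_pdf.integrableOn aux_int_pdf.integrableOn]
    simp [Phi]
  have h2 : Phi = fun r => Phi 0 + ∫ x in (0:ℝ)..r, gaussPdf x := funext h
  rw [h2]
  exact continuous_const.add (intervalIntegral.continuous_primitive
    (fun a b => aux_int_pdf.intervalIntegrable) 0)

lemma aux_phi_surj {a : ℝ} (h0 : 0 < a) (h1 : a < 1) : ∃ r, Phi r = a := by
  have e : ∀ r, Phi r = cdf (gaussianReal 0 1) r := fun r => by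
    rw [aux_phi, cdf_eq_real]
  apply mem_range_of_exists_le_of_exists_ge aux_phi_cont
  · obtain ⟨b, hb⟩ := ((tendsto_cdf_atBot (gaussianReal 0 1)).eventually (gt_mem_nhds h0)).exists
    exact ⟨b, by rw [e]; exact hb.le⟩
  · obtain ⟨b, hb⟩ := ((tendsto_cdf_atTop (gaussianReal 0 1)).eventually (lt_mem_nhds h1)).exists
    exact ⟨b, by rw [e]; exact hb.le⟩

lemma aux_deriv (x : ℝ) : HasDerivAt gaussPdf (gaussPdf x * (-x)) x := by
  have h : HasDerivAt (fun z : ℝ => -z ^ 2 / 2) (-x) x := by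
    have := ((hasDerivAt_pow 2 x).neg).div_const 2
    refine this.congr_deriv ?_
    simp; ring
  have := (h.exp).const_mul ((Real.sqrt (2 * Real.pi))⁻¹)
  refine this.congr_deriv ?_
  simp only [gaussPdf]
  ring

lemma aux_tend : Filter.Tendsto gaussPdf Filter.atBot (nhds 0) := by
  have h : Filter.Tendsto (fun z : ℝ => -z ^ 2 / 2) Filter.atBot Filter.atBot := by
    have h1 : Filter.Tendsto (fun z : ℝ => z ^ 2) Filter.atBot Filter.atTop := by
      have := (Filter.tendsto_pow_atTop (α := ℝ) (n := 2) (by norm_num)).comp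
        Filter.tendsto_neg_atBot_atTop
      refine this.congr ?_
      intro x
      simp
    have h2 := (Filter.tendsto_neg_atTop_atBot.comp h1).atBot_div_const (r := 2) (by norm_num)
    exact h2
  have := (Real.tendsto_exp_atBot.comp h).const_mul ((Real.sqrt (2 * Real.pi))⁻¹)
  rw [mul_zero] at this
  exact this

lemma aux_pdf_eq (r : ℝ) : gaussPdf r = ∫ x in Set.Iic r, (-x) ∂(gaussianReal 0 1) := by
  rw [aux_setInt measurableSet_Iic]
  have hi : Integrable (fun x => gaussPdf x * (-x)) := by
    have := (integrable_mul_exp_neg_mul_sq (b := 1/2) (by norm_num)).const_mul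
      (-(Real.sqrt (2 * Real.pi))⁻¹)
    refine this.congr (Filter.Eventually.of_forall fun x => ?_)
    simp only [gaussPdf]
    rw [show -(1/2) * x ^ 2 = -x ^ 2 / 2 by ring]
    ring
  rw [integral_Iic_of_hasDerivAt_of_tendsto' (fun x _ => aux_deriv x) hi.integrableOn aux_tend]
  simp

lemma aux_int_id : Integrable (fun x : ℝ => x) (gaussianReal 0 1) := by
  have := memLp_id_gaussianReal (μ := 0) (v := 1) 1
  exact memLp_one_iff_integrable.1 (this)

lemma aux_int_neg : Integrable (fun x : ℝ => -x) (gaussianReal 0 1) := aux_int_id.neg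

lemma aux_int_pos (t : ℝ) : Integrable (fun x : ℝ => max (-x - t) 0) (gaussianReal 0 1) :=
  ((aux_int_id.neg.sub (integrable_const t)).pos_part)

/-- key one-sided comparison -/
lemma aux_one {Ω : Type*} [MeasurableSpace Ω] (ν : Measure Ω) [IsProbabilityMeasure ν]
    (T : Ω → ℝ) (hT : Measurable T) (hi : Integrable T ν) (hm : ∫ x, T x ∂ν = 0)
    (hset : ∀ X : Set Ω, MeasurableSet X → ∫ x in X, T x ∂ν ≤ gaussI (ν X).toReal) (t : ℝ) :
    ∫⁻ x, ENNReal.ofReal (T x - t) ∂ν ≤ ∫⁻ x, ENNReal.ofReal (-x - t) ∂(gaussianReal 0 1) := by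
  have hip : Integrable (fun x => max (T x - t) 0) ν := (hi.sub (integrable_const t)).pos_part
  have e1 : ∫⁻ x, ENNReal.ofReal (T x - t) ∂ν = ENNReal.ofReal (∫ x, max (T x - t) 0 ∂ν) := by
    rw [ofReal_integral_eq_lintegral_ofReal hip
      (Filter.Eventually.of_forall fun x => le_max_right _ _)]
    congr 1; ext x
    rcases le_total (T x - t) 0 with h | h <;> simp [h]
  have e2 : ∫⁻ x, ENNReal.ofReal (-x - t) ∂(gaussianReal 0 1)
      = ENNReal.ofReal (∫ x, max (-x - t) 0 ∂(gaussianReal 0 1)) := by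
    rw [ofReal_integral_eq_lintegral_ofReal (aux_int_pos t)
      (Filter.Eventually.of_forall fun x => le_max_right _ _)]
    congr 1; ext x
    rcases le_total (-x - t) 0 with h | h <;> simp [h]
  rw [e1, e2]
  apply ENNReal.ofReal_le_ofReal
  set X : Set Ω := {x | t < T x} with hX
  have hXm : MeasurableSet X := measurableSet_lt measurable_const hT
  have e3 : ∫ x, max (T x - t) 0 ∂ν = ∫ x in X, T x ∂ν - t * (ν X).toReal := by
    have : ∫ x, max (T x - t) 0 ∂ν = ∫ x in X, (T x - t) ∂ν := by
      rw [← integral_indicator hXm]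
      congr 1; ext x
      by_cases h : t < T x
      · rw [Set.indicator_of_mem (show x ∈ X from h), max_eq_left (by linarith)]
      · rw [Set.indicator_of_notMem (show x ∉ X from h), max_eq_right (by linarith)]
    rw [this, integral_sub hi.integrableOn (integrable_const t)]
    simp [Measure.real, mul_comm]
  have ig : Integrable (fun x : ℝ => -x - t) (gaussianReal 0 1) :=
    aux_int_id.neg.sub (integrable_const t)
  rw [e3]
  have ha1 : (ν X).toReal ≤ 1 := measureReal_le_one
  have ha0 : 0 ≤ (ν X).toReal := ENNReal.toReal_nonneg
  rcases ha0.eq_or_lt with h0 | h0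
  · have : ν X = 0 := by
      rcases (ENNReal.toReal_eq_zero_iff _).1 h0.symm with h | h
      · exact h
      · exact absurd h (measure_ne_top _ _)
    rw [setIntegral_measure_zero _ this, ← h0]
    simp only [mul_zero, sub_zero]
    exact integral_nonneg fun x => le_max_right _ _
  rcases ha1.eq_or_lt with h1 | h1
  · have hae : X =ᵐ[ν] Set.univ := by
      have h2 : ν X = 1 := by
        rw [← ENNReal.ofReal_toReal (measure_ne_top ν X), h1]; simp
      rw [ae_eq_univ]
      exact (prob_compl_eq_zero_iff hXm).2 h2
    rw [setIntegral_congr_set hae, setIntegral_univ, hm, h1]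
    have h3 : ∫ x : ℝ, (-x - t) ∂(gaussianReal 0 1) = 0 - t * 1 := by
      rw [integral_sub aux_int_neg (integrable_const t), integral_neg]
      simp
    rw [← h3]
    exact integral_mono ig (aux_int_pos t) fun x => le_max_left _ _
  · obtain ⟨r, hr⟩ : ∃ r, Phi r = (ν X).toReal := aux_phi_surj h0 h1
    have hinv : Phi (PhiInv (ν X).toReal) = (ν X).toReal := Function.invFun_eq ⟨r, hr⟩
    have h4 := hset X hXm
    unfold gaussI at h4
    set q := PhiInv (ν X).toReal
    have h5 : ∫ x in Set.Iic q, (-x - t) ∂(gaussianReal 0 1)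
        = gaussPdf q - t * (ν X).toReal := by
      rw [integral_sub aux_int_neg.integrableOn (integrable_const t), aux_pdf_eq, ← hinv, aux_phi]
      simp [mul_comm]
    calc _ ≤ gaussPdf q - t * (ν X).toReal := by linarith
      _ = _ := h5.symm
      _ ≤ ∫ x in Set.Iic q, max (-x - t) 0 ∂(gaussianReal 0 1) :=
        setIntegral_mono ig.integrableOn (aux_int_pos t).integrableOn fun x => le_max_left _ _
      _ ≤ _ := setIntegral_le_integral (aux_int_pos t)
        (Filter.Eventually.of_forall fun x => le_max_right _ _)

lemma aux_abs {t : ℝ} (ht : 0 ≤ t) (x : ℝ) :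
    ENNReal.ofReal (|x| - t) = ENNReal.ofReal (x - t) + ENNReal.ofReal (-x - t) := by
  rcases le_total 0 x with h | h
  · rw [abs_of_nonneg h, ENNReal.ofReal_of_nonpos (p := -x - t) (by linarith), add_zero]
  · rw [abs_of_nonpos h, ENNReal.ofReal_of_nonpos (p := x - t) (by linarith), zero_add]

lemma aux_two {Ω : Type*} [MeasurableSpace Ω] (ν : Measure Ω) [IsProbabilityMeasure ν]
    (T : Ω → ℝ) (hT : Measurable T) (hi : Integrable T ν) (hm : ∫ x, T x ∂ν = 0)
    (hset : ∀ X : Set Ω, MeasurableSet X → |∫ x in X, T x ∂ν| ≤ gaussI (ν X).toReal)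
    (t : ℝ) (ht : 0 ≤ t) :
    ∫⁻ x, ENNReal.ofReal (|T x| - t) ∂ν ≤ ∫⁻ x, ENNReal.ofReal (|x| - t) ∂(gaussianReal 0 1) := by
  simp_rw [aux_abs ht]
  rw [lintegral_add_left (by fun_prop), lintegral_add_left (by fun_prop)]
  have hs : ∫⁻ x, ENNReal.ofReal (x - t) ∂(gaussianReal 0 1)
      = ∫⁻ x, ENNReal.ofReal (-x - t) ∂(gaussianReal 0 1) := by
    conv_lhs => rw [show gaussianReal 0 1 = (gaussianReal 0 1).map (fun x => -x) by
      rw [gaussianReal_map_neg, neg_zero]]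
    rw [lintegral_map (by fun_prop) (by fun_prop)]
  rw [hs]
  gcongr ?_ + ?_
  · exact aux_one ν T hT hi hm (fun X hX => (le_abs_self _).trans (hset X hX)) t
  · refine aux_one ν (fun x => -T x) hT.neg hi.neg (by rw [integral_neg, hm, neg_zero])
      (fun X hX => ?_) t
    rw [integral_neg]
    exact (neg_le_abs _).trans (hset X hX)

lemma aux_layer {p : ℝ} (hp : 1 < p) {x : ℝ} (hx : 0 ≤ x) :
    ENNReal.ofReal (x ^ p) = ∫⁻ t in Set.Ioi (0:ℝ),
      ENNReal.ofReal (p * (p - 1) * t ^ (p - 2)) * ENNReal.ofReal (x - t) := by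
  have i1 : IntervalIntegrable (fun t : ℝ => x * t ^ (p - 2)) volume 0 x :=
    (intervalIntegral.intervalIntegrable_rpow' (by linarith)).const_mul x
  have i2 : IntervalIntegrable (fun t : ℝ => t ^ (p - 1)) volume 0 x :=
    (intervalIntegral.intervalIntegrable_rpow' (by linarith))
  have hI : x ^ p = ∫ t in (0:ℝ)..x, p * (p - 1) * (x * t ^ (p - 2) - t ^ (p - 1)) := by
    rw [intervalIntegral.integral_const_mul, intervalIntegral.integral_sub i1 i2,
      intervalIntegral.integral_const_mul, integral_rpow (Or.inl (by linarith)),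
      integral_rpow (Or.inl (by linarith))]
    have hp1 : p - 1 ≠ 0 := by linarith
    have hp0 : p ≠ 0 := by linarith
    rw [show p - 2 + 1 = p - 1 by ring, show p - 1 + 1 = p by ring, Real.zero_rpow hp1,
      Real.zero_rpow hp0]
    have : x * x ^ (p - 1) = x ^ p := by
      rcases hx.eq_or_lt with h | h
      · rw [← h, Real.zero_rpow hp0]; simp
      · rw [← Real.rpow_one_add' hx (by linarith)]; congr 1; ring
    have e : x * ((x ^ (p-1) - 0) / (p - 1)) = x ^ p / (p - 1) := by rw [← this]; ring
    rw [e]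
    field_simp
    ring
  have hint : IntegrableOn (fun t => p * (p - 1) * (x * t ^ (p - 2) - t ^ (p - 1)))
      (Set.Ioc 0 x) := ((i1.sub i2).const_mul _).1
  have key : ∀ t ∈ Set.Ioc 0 x, p * (p - 1) * (x * t ^ (p - 2) - t ^ (p - 1))
      = p * (p - 1) * t ^ (p - 2) * (x - t) := by
    intro t ht
    have : t ^ (p - 1) = t ^ (p - 2) * t := by
      rw [← Real.rpow_add_one ht.1.ne']; congr 1; ring
    rw [this]; ring
  have hc : 0 ≤ p * (p - 1) := mul_nonneg (by linarith) (by linarith)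
  rw [hI, intervalIntegral.integral_of_le hx, ofReal_integral_eq_lintegral_ofReal hint]
  · rw [← Set.Ioc_union_Ioi_eq_Ioi hx, lintegral_union measurableSet_Ioi
      (Set.Ioc_disjoint_Ioi le_rfl)]
    have z : ∫⁻ t in Set.Ioi x,
      ENNReal.ofReal (p * (p - 1) * t ^ (p - 2)) * ENNReal.ofReal (x - t) = 0 := by
      rw [setLIntegral_congr_fun (g := fun _ => 0) measurableSet_Ioi]
      · simp
      · intro t ht
        have : t > x := ht
        simp [ENNReal.ofReal_of_nonpos (show x - t ≤ 0 by linarith)]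
    rw [z, add_zero]
    refine setLIntegral_congr_fun measurableSet_Ioc fun t ht => ?_
    rw [key t ht, ENNReal.ofReal_mul (mul_nonneg hc (Real.rpow_nonneg ht.1.le _))]
  · refine (ae_restrict_iff' measurableSet_Ioc).2 (Filter.Eventually.of_forall fun t ht => ?_)
    show 0 ≤ p * (p - 1) * (x * t ^ (p - 2) - t ^ (p - 1))
    rw [key t ht]
    exact mul_nonneg (mul_nonneg hc (Real.rpow_nonneg ht.1.le _)) (by linarith [ht.2])

lemma aux_tonelli {Ω : Type*} [MeasurableSpace Ω] (ν : Measure Ω) [IsProbabilityMeasure ν]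
    (f : Ω → ℝ) (hf : Measurable f) (h0 : ∀ x, 0 ≤ f x) {p : ℝ} (hp : 1 < p) :
    ∫⁻ x, ENNReal.ofReal (f x ^ p) ∂ν = ∫⁻ t in Set.Ioi (0:ℝ),
      ENNReal.ofReal (p * (p - 1) * t ^ (p - 2)) * ∫⁻ x, ENNReal.ofReal (f x - t) ∂ν := by
  simp_rw [fun x => aux_layer hp (h0 x)]
  rw [lintegral_lintegral_swap]
  · congr 1; ext t
    rw [lintegral_const_mul _ (by fun_prop)]
  · apply Measurable.aemeasurable
    unfold Function.uncurry
    fun_prop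

lemma aux_compare {Ω Ω' : Type*} [MeasurableSpace Ω] (ν : Measure Ω) [IsProbabilityMeasure ν]
    [MeasurableSpace Ω'] (ν' : Measure Ω') [IsProbabilityMeasure ν']
    (f : Ω → ℝ) (hf : Measurable f) (h0 : ∀ x, 0 ≤ f x)
    (f' : Ω' → ℝ) (hf' : Measurable f') (h0' : ∀ x, 0 ≤ f' x)
    (h : ∀ t, 0 ≤ t → ∫⁻ x, ENNReal.ofReal (f x - t) ∂ν ≤ ∫⁻ x, ENNReal.ofReal (f' x - t) ∂ν')
    {p : ℝ} (hp : 1 ≤ p) :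
    ∫⁻ x, ENNReal.ofReal (f x ^ p) ∂ν ≤ ∫⁻ x, ENNReal.ofReal (f' x ^ p) ∂ν' := by
  rcases hp.eq_or_lt with h1 | h1
  · subst h1
    simpa using h 0 le_rfl
  · rw [aux_tonelli ν f hf h0 h1, aux_tonelli ν' f' hf' h0' h1]
    refine setLIntegral_mono' measurableSet_Ioi fun t ht => ?_
    gcongr
    exact h t (le_of_lt ht)

lemma aux_moment {p : ℝ} (hp : 1 ≤ p) :
    ∫⁻ x, ENNReal.ofReal (|x| ^ p) ∂(gaussianReal 0 1)
      = ENNReal.ofReal (2 ^ (p / 2) * (Real.Gamma ((p + 1) / 2) / Real.sqrt Real.pi)) := by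
  have hi : Integrable (fun x : ℝ => |x| ^ p) (gaussianReal 0 1) := by
    have h := memLp_id_gaussianReal (μ := 0) (v := 1) p.toNNReal
    have h2 := h.integrable_norm_rpow'
    simpa [Real.norm_eq_abs, Real.coe_toNNReal p (by linarith)] using h2
  rw [← ofReal_integral_eq_lintegral_ofReal hi
    (Filter.Eventually.of_forall fun x => Real.rpow_nonneg (abs_nonneg _) _)]
  congr 1
  rw [integral_gaussianReal_eq_integral_smul (by norm_num)]
  have e : ∀ x : ℝ, gaussianPDFReal 0 1 x • |x| ^ p
      = (fun y : ℝ => (Real.sqrt (2 * Real.pi))⁻¹ * (y ^ p * Real.exp (-(1/2) * y ^ (2:ℝ)))) |x| := by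
    intro x
    rw [aux_pdf]
    simp only [gaussPdf, smul_eq_mul, Real.rpow_two, sq_abs]
    rw [show -(1/2) * x ^ 2 = -x ^ 2 / 2 by ring]
    ring
  simp_rw [e]
  rw [integral_comp_abs (f := fun y : ℝ => (Real.sqrt (2 * Real.pi))⁻¹ * (y ^ p * Real.exp (-(1/2) * y ^ (2:ℝ)))),
    integral_const_mul, integral_rpow_mul_exp_neg_mul_rpow (by norm_num) (by linarith) (by norm_num)]
  have h2 : ((1:ℝ)/2) ^ (-(p + 1) / 2) = 2 ^ (p / 2) * Real.sqrt 2 := by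
    rw [one_div, Real.inv_rpow (by norm_num), ← Real.rpow_neg (by norm_num), Real.sqrt_eq_rpow,
      ← Real.rpow_add (by norm_num)]
    congr 1; ring
  rw [h2, Real.sqrt_mul (by norm_num)]
  have : Real.sqrt 2 ≠ 0 := by positivity
  have : Real.sqrt Real.pi ≠ 0 := by positivity
  field_simp

/-- Moment estimates: on an atomless probability space, if `S ∈ L¹(ν)` has mean zero and
`|∫_X S dν| ≤ (2τ)^{-1/2} I(ν(X))` for every measurable `X`, then for every `p ≥ 1`,
`τ^{p/2} ∫ |S|^p dν ≤ Γ((p+1)/2)/√π`. -/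
theorem stmt17 {Ω : Type*} [MeasurableSpace Ω] (ν : Measure Ω) [IsProbabilityMeasure ν]
    (hatomless : ∀ s : Set Ω, MeasurableSet s → 0 < ν s →
      ∃ t, t ⊆ s ∧ MeasurableSet t ∧ 0 < ν t ∧ ν t < ν s)
    (τ : ℝ) (hτ : 0 < τ) (S : Ω → ℝ) (hS : Integrable S ν)
    (hmean : ∫ x, S x ∂ν = 0)
    (hset : ∀ X : Set Ω, MeasurableSet X →
      |∫ x in X, S x ∂ν| ≤ (Real.sqrt (2 * τ))⁻¹ * gaussI (ν X).toReal)
    (p : ℝ) (hp : 1 ≤ p) :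
    ENNReal.ofReal (τ ^ (p / 2)) * ∫⁻ x, ENNReal.ofReal (|S x| ^ p) ∂ν ≤
      ENNReal.ofReal (Real.Gamma ((p + 1) / 2) / Real.sqrt Real.pi) := by
  set c := Real.sqrt (2 * τ) with hc
  have hcpos : 0 < c := Real.sqrt_pos.2 (by linarith)
  obtain ⟨S', hS'm, hSS'⟩ : ∃ S' : Ω → ℝ, Measurable S' ∧ S =ᵐ[ν] S' :=
    ⟨hS.1.mk S, hS.1.stronglyMeasurable_mk.measurable, hS.1.ae_eq_mk⟩
  have h1 := aux_compare ν (gaussianReal 0 1) (fun x => |c * S' x|) (by fun_prop)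
    (fun x => abs_nonneg _) (fun x => |x|) (by fun_prop) (fun x => abs_nonneg _)
    (fun t ht => aux_two ν (fun x => c * S' x) (by fun_prop) ((hS.congr hSS').const_mul c)
      (by rw [integral_const_mul, ← integral_congr_ae hSS', hmean, mul_zero])
      (fun X hX => by
        rw [integral_const_mul, ← integral_congr_ae (ae_restrict_of_ae hSS'), abs_mul,
          abs_of_pos hcpos]
        have := mul_le_mul_of_nonneg_left (hset X hX) hcpos.le
        rwa [← mul_assoc, mul_inv_cancel₀ hcpos.ne', one_mul] at this) t ht) hp
  rw [aux_moment hp] at h1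
  have hcp : c ^ p = 2 ^ (p / 2) * τ ^ (p / 2) := by
    rw [hc, Real.sqrt_eq_rpow, ← Real.rpow_mul (by linarith), Real.mul_rpow (by norm_num) hτ.le]
    congr 2 <;> ring
  have h2 : ∫⁻ x, ENNReal.ofReal (|c * S' x| ^ p) ∂ν
      = ENNReal.ofReal (2 ^ (p / 2)) *
        (ENNReal.ofReal (τ ^ (p / 2)) * ∫⁻ x, ENNReal.ofReal (|S x| ^ p) ∂ν) := by
    rw [← mul_assoc, ← ENNReal.ofReal_mul (by positivity), ← hcp,
      ← lintegral_const_mul' _ _ ENNReal.ofReal_ne_top]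
    refine lintegral_congr_ae ?_
    filter_upwards [hSS'] with x hx
    rw [← ENNReal.ofReal_mul (by positivity), hx, abs_mul, abs_of_pos hcpos,
      Real.mul_rpow hcpos.le (abs_nonneg _)]
  rw [h2, ENNReal.ofReal_mul (by positivity)] at h1
  exact (ENNReal.mul_le_mul_iff_right (by simp; positivity) ENNReal.ofReal_ne_top).1 h1
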